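/- arXiv:math/9803126 — 2 statements merged into one kernel-verified Lean document; each statement's English description precedes it below -/
import Mathlib

section
/- Let n, k be natural numbers with k ≥ 2, let v : Fin k → ℚ^n, and let I₊ and I₋ be nonempty disjoint subsets of Fin k with I₊ ∪ I₋ = Fin k. Assume ∑_{i ∈ I₊} v i = ∑_{j ∈ I₋} v j, and write v₀ for this common value. Then the following four subsets of ℚ^n coincide: (1) cone({v i : i ∈ Fin k}); (2) ⋃_{i ∈ I₊} cone({v α : α ≠ i}); (3) ⋃_{j ∈ I₋} cone({v α : α ≠ j}); (4) ⋃_{i ∈ I₊} ⋃_{j ∈ I₋} cone({v₀} ∪ {v α : α ∉ {i, j}}). -/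
/-- The cone (set of all nonnegative rational linear combinations) generated by a set `S`
of vectors in a `ℚ`-vector space. -/
def qCone {V : Type*} [AddCommMonoid V] [Module ℚ V] (S : Set V) : Set V :=
  {x | ∃ (t : Finset V) (c : V → ℚ), ↑t ⊆ S ∧ (∀ y ∈ t, 0 ≤ c y) ∧ x = ∑ y ∈ t, c y • y}

/-!
Star subdivision: if `s` is a nonempty finite set of generators with sum `v₀`, then subtracting the
smallest coefficient over `s` from all of them trades one generator of `s` for `v₀`, so the cone is
the union of the cones in which some `i ∈ s` is replaced by `v₀`. Star subdividing the whole cone at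
`I₊` gives the first union, because `v₀ = ∑ j ∈ I₋, v j` already lies in the cone of the generators
other than `i ∈ I₊`; the second union is the same with `I₊` and `I₋` exchanged. Star subdividing
each piece of the first union at `I₋` gives the common refinement.
-/

open Submodule

theorem qCone_eq_hull {V : Type*} [AddCommMonoid V] [Module ℚ V] (S : Set V) :
    qCone S = PointedCone.hull ℚ S := by
  ext x
  constructor
  · rintro ⟨t, c, htS, hc, rfl⟩
    exact sum_mem fun y hy ↦
      PointedCone.smul_mem _ (hc y hy) (subset_span (htS hy))
  · intro hx
    obtain ⟨c, t, htS, -, rfl⟩ := mem_span_iff_exists_finset_subset.mp hx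
    exact ⟨t, fun y ↦ c y, htS, fun y _ ↦ (c y).2, rfl⟩

section Span

variable {R M ι : Type*} [Semiring R] [AddCommMonoid M] [Module R M]
  {v : ι → M} {s t : Finset ι} {A : Set ι}

theorem sum_mem_span_image (hsA : ↑s ⊆ A) : ∑ a ∈ s, v a ∈ span R (v '' A) :=
  sum_mem fun _ ha ↦ subset_span (Set.mem_image_of_mem v (hsA ha))

-- For `R` the nonnegative elements of a linearly ordered ring, `span R` is the generated cone.
variable [LinearOrder R] [CanonicallyOrderedAdd R]

theorem exists_sum_smul_mem_span_insert_sum (v : ι → M) (hs : s.Nonempty) (c : ι → R) :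
    ∃ i ∈ s, ∑ a ∈ s, c a • v a ∈ span R (insert (∑ a ∈ s, v a) (v '' (↑s \ {i}))) := by
  classical
  obtain ⟨i, hi, hmin⟩ := s.exists_min_image c hs
  choose! d hd using fun a ha ↦ exists_add_of_le (hmin a ha)
  have hsum : ∑ a ∈ s, c a • v a =
      c i • ∑ a ∈ s, v a + ∑ a ∈ s.erase i, d a • v a :=
    calc ∑ a ∈ s, c a • v a
      _ = c i • v i + ∑ a ∈ s.erase i, (c i + d a) • v a := by
        rw [← Finset.add_sum_erase s _ hi]
        congr 1
        exact Finset.sum_congr rfl fun a ha ↦ by rw [← hd a (Finset.mem_of_mem_erase ha)]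
      _ = c i • ∑ a ∈ s, v a + ∑ a ∈ s.erase i, d a • v a := by
        simp only [← Finset.add_sum_erase s v hi, add_smul, smul_add, Finset.smul_sum,
          Finset.sum_add_distrib, add_assoc]
  refine ⟨i, hi, hsum ▸ add_mem (smul_mem _ _ (mem_span_of_mem (Set.mem_insert _ _))) ?_⟩
  refine sum_mem fun a ha ↦ smul_mem _ _ (mem_span_of_mem (Set.mem_insert_of_mem _ ?_))
  exact Set.mem_image_of_mem v (by simpa [and_comm] using ha)

theorem span_image_eq_iUnion_span_insert_sum (v : ι → M) (hs : s.Nonempty) (hsA : ↑s ⊆ A) :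
    (span R (v '' A) : Set M) =
      ⋃ i ∈ (s : Set ι), span R (insert (∑ a ∈ s, v a) (v '' (A \ {i}))) := by
  refine Set.Subset.antisymm (fun x hx ↦ ?_) (Set.iUnion₂_subset fun i _ ↦ ?_)
  · rw [← Set.union_sdiff_cancel hsA, Set.image_union, span_union, SetLike.mem_coe, mem_sup] at hx
    obtain ⟨y, hy, z, hz, rfl⟩ := hx
    obtain ⟨c, rfl⟩ := mem_span_image_finset_iff_exists_fun' R |>.mp hy
    obtain ⟨i, hi, hmem⟩ := exists_sum_smul_mem_span_insert_sum v hs c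
    refine Set.mem_biUnion hi (add_mem (span_mono ?_ hmem) (span_mono ?_ hz))
    · gcongr
    · refine (Set.image_mono ?_).trans (Set.subset_insert _ _)
      gcongr
      simpa using hi
  · exact span_le.mpr (Set.insert_subset (sum_mem_span_image hsA)
      ((Set.image_mono Set.sdiff_subset).trans subset_span))

theorem span_range_eq_iUnion_span_image_ne (v : ι → M) (hs : s.Nonempty) (hst : Disjoint s t)
    (hrel : ∑ a ∈ s, v a = ∑ a ∈ t, v a) :
    (span R (Set.range v) : Set M) = ⋃ i ∈ (s : Set ι), span R (v '' {α | α ≠ i}) := by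
  rw [← Set.image_univ, span_image_eq_iUnion_span_insert_sum v hs (Set.subset_univ _)]
  refine Set.iUnion₂_congr fun i hi ↦ ?_
  rw [← Set.compl_eq_univ_sdiff, hrel, span_insert_eq_span (sum_mem_span_image ?_)]
  · rfl
  · exact fun a ha hai ↦ Finset.disjoint_left.mp hst hi (hai ▸ ha)

theorem stmt2_general (v : ι → M) (hs : s.Nonempty) (ht : t.Nonempty) (hst : Disjoint s t)
    (hrel : ∑ i ∈ s, v i = ∑ j ∈ t, v j) :
    (span R (Set.range v) : Set M) = (⋃ i ∈ (s : Set ι), span R (v '' {α | α ≠ i})) ∧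
    (⋃ i ∈ (s : Set ι), (span R (v '' {α | α ≠ i}) : Set M)) =
      (⋃ j ∈ (t : Set ι), span R (v '' {α | α ≠ j})) ∧
    (⋃ j ∈ (t : Set ι), (span R (v '' {α | α ≠ j}) : Set M)) =
      (⋃ i ∈ (s : Set ι), ⋃ j ∈ (t : Set ι),
        span R (insert (∑ a ∈ s, v a) (v '' {α | α ≠ i ∧ α ≠ j}))) := by
  have lower := span_range_eq_iUnion_span_image_ne (R := R) v hs hst hrel
  have upper := span_range_eq_iUnion_span_image_ne (R := R) v ht hst.symm hrel.symm
  refine ⟨lower, lower.symm.trans upper, upper.symm.trans (lower.trans ?_)⟩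
  refine Set.iUnion₂_congr fun i hi ↦ ?_
  rw [hrel]
  exact span_image_eq_iUnion_span_insert_sum v ht
    fun a ha hai ↦ Finset.disjoint_left.mp hst hi (hai ▸ ha)

end Span

theorem stmt2 {n k : ℕ} (hk : 2 ≤ k) (v : Fin k → Fin n → ℚ)
    (Ip Im : Finset (Fin k)) (hIp : Ip.Nonempty) (hIm : Im.Nonempty)
    (hdisj : Disjoint Ip Im) (hunion : Ip ∪ Im = Finset.univ)
    (hrel : ∑ i ∈ Ip, v i = ∑ j ∈ Im, v j) :
    qCone (Set.range v) = (⋃ i ∈ (Ip : Set (Fin k)), qCone (v '' {α | α ≠ i})) ∧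
    (⋃ i ∈ (Ip : Set (Fin k)), qCone (v '' {α | α ≠ i})) =
      (⋃ j ∈ (Im : Set (Fin k)), qCone (v '' {α | α ≠ j})) ∧
    (⋃ j ∈ (Im : Set (Fin k)), qCone (v '' {α | α ≠ j})) =
      (⋃ i ∈ (Ip : Set (Fin k)), ⋃ j ∈ (Im : Set (Fin k)),
        qCone (insert (∑ a ∈ Ip, v a) (v '' {α | α ≠ i ∧ α ≠ j}))) := by
  simp only [qCone_eq_hull]
  exact stmt2_general v hIp hIm hdisj hrel
end

section
/- Let n, m be natural numbers, and let ρ i = (v i, w i) ∈ ℤ^n × ℤ, i ∈ Fin m, be a family that is ℚ-linearly independent, with the projected family (v i) ℚ-linearly dependent; let r : Fin m → ℚ be a nonzero solution of ∑ i, r i • v i = 0. Assume π-nonsingularity: every subfamily (v i)_{i ∈ T}, T ⊆ Fin m, that is ℚ-linearly independent is unimodular. Let τ ⊆ Fin m be such that (v i)_{i ∈ τ} is ℚ-linearly independent and τ is codefinite, i.e., it is not the case that both some i ∈ τ has r i > 0 and some i ∈ τ has r i < 0. Set q = ∑_{i ∈ τ} v i. Then for every j ∈ τ, defining u : Fin m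 → ℤ^n by u j = q and u i = v i for i ≠ j, every ℚ-linearly independent subfamily of (u i) is unimodular. -/
/-- The coercion of an integer lattice vector to a rational vector. -/
def castQ {n : ℕ} (x : Fin n → ℤ) : Fin n → ℚ := fun j => (x j : ℚ)

/-- A family of lattice vectors is unimodular if it is `ℚ`-linearly independent and the
subgroup of `ℤ^n` it generates equals the set of all lattice points lying in its
`ℚ`-linear span. -/
def IsUnimodular {n : ℕ} {ι : Type*} (v : ι → Fin n → ℤ) : Prop :=
  LinearIndependent ℚ (fun i => castQ (v i)) ∧
  ∀ z : Fin n → ℤ,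
    z ∈ Submodule.span ℤ (Set.range v) ↔
      castQ z ∈ Submodule.span ℚ (Set.range fun i => castQ (v i))

/-!
Let `q` be the sum of the `v i`, `i ∈ τ`, and extend the given independent family containing `q`
by vectors `v i` to a basis of the span of `v`; subfamilies of unimodular families are unimodular,
so only the basis matters. It consists of `q` and the `v i`, `i ∈ S`, whose span is the kernel of
a functional `φ` on the span of `v`. Two indices `i, k ∈ τ` with `φ (v i)` and `φ (v k)` nonzero
lie on a common circuit in `S ∪ {i, k}`, so codefiniteness forces these values to have opposite
signs, while `π`-nonsingularity of `S ∪ {i}` and `S ∪ {k}` forces equal absolute values. A nonzero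
sum of pairwise opposite numbers has only one nonzero term, hence `φ q = φ (v k)` for some `k`.
Thus `v k - q` is an integral combination of the `v i`, `i ∈ S`, and `q` may be exchanged for
`v k`, which gives a unimodular family.
-/

open Submodule

section Lattice

variable {ι : Type*} {n : ℕ}

/-- The inclusion `ℤ^n → ℚ^n` given by `castQ`, bundled as a `ℤ`-linear map. -/
def castQLinearMap (n : ℕ) : (Fin n → ℤ) →ₗ[ℤ] (Fin n → ℚ) :=
  (Algebra.linearMap ℤ ℚ).compLeft (Fin n)

theorem castQ_add (x y : Fin n → ℤ) : castQ (x + y) = castQ x + castQ y :=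
  map_add (castQLinearMap n) x y

theorem castQ_sub (x y : Fin n → ℤ) : castQ (x - y) = castQ x - castQ y :=
  map_sub (castQLinearMap n) x y

theorem castQ_zsmul (a : ℤ) (x : Fin n → ℤ) : castQ (a • x) = (a : ℚ) • castQ x := by
  rw [Int.cast_smul_eq_zsmul]
  exact map_smul (castQLinearMap n) a x

theorem castQ_sum (s : Finset ι) (v : ι → Fin n → ℤ) :
    castQ (∑ i ∈ s, v i) = ∑ i ∈ s, castQ (v i) :=
  map_sum (castQLinearMap n) v s

theorem castQ_eq_zero_iff {x : Fin n → ℤ} : castQ x = 0 ↔ x = 0 := by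
  simp [funext_iff, castQ]

theorem castQ_mem_span_image {v : ι → Fin n → ℤ} {S : Set ι} {z : Fin n → ℤ}
    (hz : z ∈ span ℤ (v '' S)) : castQ z ∈ span ℚ ((castQ ∘ v) '' S) := by
  rw [Set.image_comp]
  exact span_le_restrictScalars ℤ ℚ _ (apply_mem_span_image_of_mem_span (castQLinearMap n) hz)

end Lattice

section Unimodular

variable {ι : Type*} {n : ℕ} {v : ι → Fin n → ℤ} {S T : Set ι}

theorem isUnimodular_subtype_iff :
    IsUnimodular (fun i : T => v i) ↔ LinearIndepOn ℚ (castQ ∘ v) T ∧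
      ∀ z, castQ z ∈ span ℚ ((castQ ∘ v) '' T) → z ∈ span ℤ (v '' T) := by
  have range_eq : Set.range (fun i : T => castQ (v i)) = (castQ ∘ v) '' T :=
    (Set.image_eq_range (castQ ∘ v) T).symm
  rw [IsUnimodular, range_eq, ← Set.image_eq_range]
  exact and_congr_right fun _ => forall_congr' fun z =>
    ⟨Iff.mpr, fun hz => ⟨castQ_mem_span_image, hz⟩⟩

theorem IsUnimodular.mono (hT : IsUnimodular (fun i : T => v i)) (hST : S ⊆ T) :
    IsUnimodular (fun i : S => v i) := by
  rw [isUnimodular_subtype_iff] at hT ⊢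
  obtain ⟨hindep, hsat⟩ := hT
  refine ⟨hindep.mono hST, fun z hz => ?_⟩
  have hzT : z ∈ span ℤ (v '' S) ⊔ span ℤ (v '' (T \ S)) := by
    rw [← span_union, ← Set.image_union, Set.union_sdiff_cancel hST]
    exact hsat z (span_mono (Set.image_mono hST) hz)
  obtain ⟨x, hx, y, hy, rfl⟩ := mem_sup.1 hzT
  have hyS : castQ y ∈ span ℚ ((castQ ∘ v) '' S) := by
    rw [castQ_add] at hz
    exact (add_mem_cancel_left (castQ_mem_span_image hx)).1 hz
  have hdisj : Disjoint (span ℚ ((castQ ∘ v) '' S)) (span ℚ ((castQ ∘ v) '' (T \ S))) :=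
    ((linearIndepOn_union_iff Set.disjoint_sdiff_right).1
      ((Set.union_sdiff_cancel hST).symm ▸ hindep)).2.2
  have hy0 : y = 0 := castQ_eq_zero_iff.1 (disjoint_def.1 hdisj _ hyS (castQ_mem_span_image hy))
  rwa [hy0, add_zero]

/-- A family of lattice vectors is `π`-nonsingular if each of its `ℚ`-linearly independent
subfamilies is unimodular. In the paper these are the projections of the generators of a
simplicial cone; the definition does not refer to the cone. -/
def IsPiNonsingular (v : ι → Fin n → ℤ) : Prop :=
  ∀ T : Set ι, LinearIndepOn ℚ (castQ ∘ v) T → IsUnimodular (fun i : T => v i)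

theorem IsPiNonsingular.mem_span (hv : IsPiNonsingular v) (hT : LinearIndepOn ℚ (castQ ∘ v) T)
    {z : Fin n → ℤ} (hz : castQ z ∈ span ℚ ((castQ ∘ v) '' T)) : z ∈ span ℤ (v '' T) :=
  (isUnimodular_subtype_iff.1 (hv T hT)).2 z hz

end Unimodular

section Circuit

variable {ι K V : Type*} [Field K] [AddCommGroup V] [Module K V] {f : ι → V} {r s : ι →₀ K}

/-- A nonzero linear relation `r` among the vectors `f i` is a circuit relation if its support
is a circuit of `f`; this is expressed by saying that the relations supported there are the
scalar multiples of `r`. -/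
structure IsCircuitRelation (f : ι → V) (r : ι →₀ K) : Prop where
  ne_zero : r ≠ 0
  linearCombination_eq_zero : Finsupp.linearCombination K f r = 0
  exists_eq_smul : ∀ s : ι →₀ K, Finsupp.linearCombination K f s = 0 →
    s.support ⊆ r.support → ∃ t : K, s = t • r

theorem isCircuitRelation_of_support_subset_insert {S : Set ι} (hS : LinearIndepOn K f S)
    (hr : Finsupp.linearCombination K f r = 0) {k : ι} (hrk : r k ≠ 0)
    (hsupp : (r.support : Set ι) ⊆ insert k S) : IsCircuitRelation f r where
  ne_zero := by rintro rfl; exact hrk rfl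
  linearCombination_eq_zero := hr
  exists_eq_smul s hs hsr := by
    refine ⟨s k / r k, sub_eq_zero.1 (linearIndepOn_iff.1 hS _ (fun i hi => ?_) ?_)⟩
    · have hik : i ≠ k := by
        rintro rfl
        simp [hrk] at hi
      have hir : i ∈ r.support := by
        by_contra h
        have hsi : s i = 0 := Finsupp.notMem_support_iff.1 fun h' => h (hsr h')
        simp_all
      exact (hsupp hir).resolve_left hik
    · rw [map_sub, map_smul, hs, hr, smul_zero, sub_zero]

theorem exists_isCircuitRelation_of_add_mem_span {S : Set ι} (hS : LinearIndepOn K f S) {i k : ι}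
    (hik : i ≠ k) (hi : f i ∉ span K (f '' S)) (hk : f k ∉ span K (f '' S)) {a b : K} (hb : b ≠ 0)
    (h : a • f i + b • f k ∈ span K (f '' S)) :
    ∃ r : ι →₀ K, IsCircuitRelation f r ∧ r i = a ∧ r k = b := by
  classical
  obtain ⟨l, hl, hlsum⟩ := (Finsupp.mem_span_image_iff_linearCombination K).1 h
  have apply_eq_zero {p : ι} (hp : f p ∉ span K (f '' S)) : l p = 0 :=
    Finsupp.notMem_support_iff.1 fun h' => hp (subset_span (Set.mem_image_of_mem f (hl h')))
  have hrk : (Finsupp.single i a + Finsupp.single k b - l) k = b := by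
    simp [apply_eq_zero hk, hik]
  refine ⟨Finsupp.single i a + Finsupp.single k b - l, ?_, ?_, hrk⟩
  · refine isCircuitRelation_of_support_subset_insert (hS.insert hi) (k := k) ?_
      (by rwa [hrk]) fun p hp => ?_
    · simp [hlsum]
    · by_contra hpS
      simp only [Set.mem_insert_iff, not_or] at hpS
      have hlp : l p = 0 := Finsupp.notMem_support_iff.1 fun h' => hpS.2.2 (hl h')
      simp [hlp, Ne.symm hpS.1, Ne.symm hpS.2.1] at hp
  · simp [apply_eq_zero hi, hik.symm]

theorem exists_eq_smul_of_linearIndependent_prodMk {w : ι → K}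
    (hfw : LinearIndependent K (fun i => (f i, w i))) (hr : r ≠ 0)
    (hrf : Finsupp.linearCombination K f r = 0) (hsf : Finsupp.linearCombination K f s = 0) :
    ∃ t : K, s = t • r := by
  have eq_zero_of_heights {l : ι →₀ K} (hlf : Finsupp.linearCombination K f l = 0)
      (hlw : Finsupp.linearCombination K w l = 0) : l = 0 := by
    refine linearIndependent_iff.1 hfw l (Prod.ext ?_ ?_)
    · exact (Finsupp.apply_linearCombination K (LinearMap.fst K V K) _ l).trans hlf
    · exact (Finsupp.apply_linearCombination K (LinearMap.snd K V K) _ l).trans hlw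
  have hrw : Finsupp.linearCombination K w r ≠ 0 := fun h => hr (eq_zero_of_heights hrf h)
  refine ⟨Finsupp.linearCombination K w s / Finsupp.linearCombination K w r,
    sub_eq_zero.1 (eq_zero_of_heights ?_ ?_)⟩
  · rw [map_sub, map_smul, hsf, hrf, smul_zero, sub_zero]
  · rw [map_sub, map_smul, smul_eq_mul, div_mul_cancel₀ _ hrw, sub_self]

end Circuit

theorem exists_mem_sum_eq_of_pairwise_eq_neg {ι M : Type*} [AddCommGroup M] [IsAddTorsionFree M]
    {τ : Finset ι} {a : ι → M}
    (hneg : ∀ i ∈ τ, ∀ k ∈ τ, i ≠ k → a i ≠ 0 → a k ≠ 0 → a i = -a k)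
    (hsum : ∑ i ∈ τ, a i ≠ 0) : ∃ k ∈ τ, ∑ i ∈ τ, a i = a k := by
  obtain ⟨k, hk, hak⟩ := Finset.exists_ne_zero_of_sum_ne_zero hsum
  refine ⟨k, hk, Finset.sum_eq_single_of_mem k hk fun i hi hik => ?_⟩
  by_contra hai
  refine hsum ?_
  rw [Finset.sum_eq_add_of_mem i k hi hk hik, hneg i hi k hk hik hai hak, neg_add_cancel]
  rintro p hp ⟨hpi, hpk⟩
  by_contra hap
  refine hak (self_eq_neg.1 ?_)
  rw [← hneg p hp k hk hpk hap hak, hneg p hp i hi hpi hap hai, hneg i hi k hk hik hai hak, neg_neg]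

section Functional

variable {ι R M K V : Type*} [Semiring R] [AddCommMonoid M] [Module R M] [Field K]
  [AddCommGroup V] [Module K V]

theorem apply_mem_span_range (f : ι → M) (i : ι) : f i ∈ span R (Set.range f) :=
  subset_span (Set.mem_range_self i)

theorem exists_functional_ker_inf_span_range_eq {f : ι → V} {S : Set ι} {q : V}
    (hq : q ∉ span K (f '' S))
    (hspan : ∀ i, f i ∈ span K (insert q (f '' S))) :
    ∃ φ : V →ₗ[K] K, φ q ≠ 0 ∧ LinearMap.ker φ ⊓ span K (Set.range f) = span K (f '' S) := by
  obtain ⟨φ, hφq, hφS⟩ := exists_le_ker_of_notMem hq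
  refine ⟨φ, hφq, le_antisymm ?_ (le_inf hφS (span_mono (Set.image_subset_range f S)))⟩
  rintro x ⟨hφx, hx⟩
  obtain ⟨a, y, hy, rfl⟩ := mem_span_insert.1 (span_le.2 (Set.range_subset_iff.2 hspan) hx)
  have hφy : φ y = 0 := hφS hy
  have ha : a = 0 := by simpa [hφy, hφq] using hφx
  simpa [ha] using hy

theorem mem_span_image_iff_apply_eq_zero {f : ι → M} {S : Set ι} {φ : M →ₗ[R] R}
    (hφ : LinearMap.ker φ ⊓ span R (Set.range f) = span R (f '' S)) {x : M}
    (hx : x ∈ span R (Set.range f)) : x ∈ span R (f '' S) ↔ φ x = 0 := by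
  rw [← hφ, mem_inf, LinearMap.mem_ker, and_iff_left hx]

end Functional

section Codefinite

/-- A finite set of indices is codefinite with respect to a coefficient vector `r` if `r` does
not take both a positive and a negative value on it. -/
def IsCodefinite {ι K : Type*} [Zero K] [LT K] (τ : Finset ι) (r : ι → K) : Prop :=
  ¬ ((∃ i ∈ τ, 0 < r i) ∧ (∃ i ∈ τ, r i < 0))

variable {ι K V : Type*} [Field K] [LinearOrder K] [IsStrictOrderedRing K]

theorem IsCodefinite.smul {τ : Finset ι} {r : ι → K} (h : IsCodefinite τ r) (t : K) :
    IsCodefinite τ (t • r) := by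
  rintro ⟨⟨i, hi, hpos⟩, ⟨k, hk, hneg⟩⟩
  simp only [Pi.smul_apply, smul_eq_mul] at hpos hneg
  rcases lt_trichotomy t 0 with ht | rfl | ht
  · exact h ⟨⟨k, hk, pos_of_mul_neg_right hneg ht.le⟩, ⟨i, hi, neg_of_mul_pos_right hpos ht.le⟩⟩
  · simp at hpos
  · exact h ⟨⟨i, hi, pos_of_mul_pos_right hpos ht.le⟩, ⟨k, hk, neg_of_mul_neg_right hneg ht.le⟩⟩

theorem IsCircuitRelation.isCodefinite [Fintype ι] [AddCommGroup V] [Module K V] {f : ι → V}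
    {w : ι → K} {c : ι →₀ K} (hc : IsCircuitRelation f c)
    (hfw : LinearIndependent K (fun i => (f i, w i))) {r : ι → K} (hr : r ≠ 0)
    (hrel : ∑ i, r i • f i = 0) {τ : Finset ι} (hτ : IsCodefinite τ r) : IsCodefinite τ c := by
  obtain ⟨t, rfl⟩ := exists_eq_smul_of_linearIndependent_prodMk
    (r := (Finsupp.linearEquivFunOnFinite K K ι).symm r) hfw
    ((LinearEquiv.map_ne_zero_iff _).2 hr)
    ((Finsupp.linearCombination_eq_fintype_linearCombination_apply K _ r).trans hrel)
    hc.linearCombination_eq_zero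
  exact hτ.smul t

theorem apply_mul_apply_neg_of_isCodefinite [AddCommGroup V] [Module K V] {f : ι → V} {S : Set ι}
    {φ : V →ₗ[K] K} (hS : LinearIndepOn K f S)
    (hφ : LinearMap.ker φ ⊓ span K (Set.range f) = span K (f '' S)) {τ : Finset ι}
    (hτ : ∀ r : ι →₀ K, IsCircuitRelation f r → IsCodefinite τ r) {i k : ι} (hi : i ∈ τ)
    (hk : k ∈ τ) (hik : i ≠ k) (hφi : φ (f i) ≠ 0) (hφk : φ (f k) ≠ 0) :
    φ (f i) * φ (f k) < 0 := by
  have notMem {p : ι} (hp : φ (f p) ≠ 0) : f p ∉ span K (f '' S) :=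
    (mem_span_image_iff_apply_eq_zero hφ (apply_mem_span_range f p)).not.2 hp
  have hmem : φ (f k) • f i + (-φ (f i)) • f k ∈ span K (f '' S) := by
    refine (mem_span_image_iff_apply_eq_zero hφ
      (add_mem (smul_mem _ _ (apply_mem_span_range f i))
        (smul_mem _ _ (apply_mem_span_range f k)))).2 ?_
    simp only [map_add, map_smul, smul_eq_mul]
    ring
  obtain ⟨r, hr, hri, hrk⟩ := exists_isCircuitRelation_of_add_mem_span hS hik (notMem hφi)
    (notMem hφk) (neg_ne_zero.2 hφi) hmem
  refine (mul_ne_zero hφi hφk).lt_of_le (not_lt.1 fun hpos => hτ r hr ?_)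
  rcases mul_pos_iff.1 hpos with ⟨hipos, hkpos⟩ | ⟨hineg, hkneg⟩
  · exact ⟨⟨i, hi, by rwa [hri]⟩, ⟨k, hk, by rwa [hrk, neg_neg_iff_pos]⟩⟩
  · exact ⟨⟨k, hk, by rwa [hrk, neg_pos]⟩, ⟨i, hi, by rwa [hri]⟩⟩

end Codefinite

section Hyperplane

variable {ι : Type*} {n : ℕ} {v : ι → Fin n → ℤ} {S : Set ι} {φ : (Fin n → ℚ) →ₗ[ℚ] ℚ}

theorem IsPiNonsingular.abs_apply_le (hv : IsPiNonsingular v)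
    (hS : LinearIndepOn ℚ (castQ ∘ v) S)
    (hφ : LinearMap.ker φ ⊓ span ℚ (Set.range (castQ ∘ v)) = span ℚ ((castQ ∘ v) '' S))
    {i k : ι} (hi : φ (castQ (v i)) ≠ 0) (hk : φ (castQ (v k)) ≠ 0) :
    |φ (castQ (v k))| ≤ |φ (castQ (v i))| := by
  have mem_range (p : ι) : castQ (v p) ∈ span ℚ (Set.range (castQ ∘ v)) :=
    apply_mem_span_range (castQ ∘ v) p
  have hkS : castQ (v k) ∉ span ℚ ((castQ ∘ v) '' S) :=
    (mem_span_image_iff_apply_eq_zero hφ (mem_range k)).not.2 hk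
  have hiQ : castQ (v i) ∈ span ℚ ((castQ ∘ v) '' insert k S) := by
    rw [Set.image_insert_eq, mem_span_insert']
    refine ⟨-(φ (castQ (v i)) / φ (castQ (v k))), (mem_span_image_iff_apply_eq_zero hφ
      (add_mem (mem_range i) (smul_mem _ _ (mem_range k)))).2 ?_⟩
    simp [hk]
  have hiZ : v i ∈ span ℤ (v '' insert k S) := hv.mem_span (hS.insert hkS) hiQ
  rw [Set.image_insert_eq] at hiZ
  obtain ⟨a, s, hs, his⟩ := mem_span_insert.1 hiZ
  have hφs : φ (castQ s) = 0 := by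
    have hsS := castQ_mem_span_image hs
    rw [← hφ] at hsS
    exact hsS.1
  have hφi : φ (castQ (v i)) = a * φ (castQ (v k)) := by
    rw [his, castQ_add, castQ_zsmul, map_add, map_smul, hφs, add_zero, smul_eq_mul]
  have ha : a ≠ 0 := by
    rintro rfl
    simp [hφi] at hi
  rw [hφi, abs_mul]
  exact le_mul_of_one_le_left (abs_nonneg _) (by exact_mod_cast Int.one_le_abs ha)

theorem IsPiNonsingular.apply_eq_neg_apply (hv : IsPiNonsingular v)
    (hS : LinearIndepOn ℚ (castQ ∘ v) S)
    (hφ : LinearMap.ker φ ⊓ span ℚ (Set.range (castQ ∘ v)) = span ℚ ((castQ ∘ v) '' S))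
    {τ : Finset ι} (hτ : ∀ r : ι →₀ ℚ, IsCircuitRelation (castQ ∘ v) r → IsCodefinite τ r)
    {i k : ι} (hi : i ∈ τ) (hk : k ∈ τ) (hik : i ≠ k) (hφi : φ (castQ (v i)) ≠ 0)
    (hφk : φ (castQ (v k)) ≠ 0) : φ (castQ (v i)) = -φ (castQ (v k)) := by
  have habs := (hv.abs_apply_le hS hφ hφk hφi).antisymm (hv.abs_apply_le hS hφ hφi hφk)
  have hmul : φ (castQ (v i)) * φ (castQ (v k)) < 0 :=
    apply_mul_apply_neg_of_isCodefinite hS hφ hτ hi hk hik hφi hφk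
  refine (abs_eq_abs.1 habs).resolve_left fun heq => ?_
  rw [heq] at hmul
  exact hmul.not_ge (mul_self_nonneg _)

theorem IsPiNonsingular.exists_sub_sum_mem_span (hv : IsPiNonsingular v)
    (hS : LinearIndepOn ℚ (castQ ∘ v) S) {τ : Finset ι}
    (hτ : ∀ r : ι →₀ ℚ, IsCircuitRelation (castQ ∘ v) r → IsCodefinite τ r)
    (hq : castQ (∑ i ∈ τ, v i) ∉ span ℚ ((castQ ∘ v) '' S))
    (hspan : ∀ i, castQ (v i) ∈ span ℚ (insert (castQ (∑ i ∈ τ, v i)) ((castQ ∘ v) '' S))) :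
    ∃ k, castQ (v k - ∑ i ∈ τ, v i) ∈ span ℚ ((castQ ∘ v) '' S) := by
  obtain ⟨φ, hφq, hφ⟩ := exists_functional_ker_inf_span_range_eq hq hspan
  have hφsum : φ (castQ (∑ i ∈ τ, v i)) = ∑ i ∈ τ, φ (castQ (v i)) := by
    rw [castQ_sum, map_sum]
  obtain ⟨k, -, hk⟩ := exists_mem_sum_eq_of_pairwise_eq_neg
    (fun i hi k hk => hv.apply_eq_neg_apply hS hφ hτ hi hk) (hφsum ▸ hφq)
  have mem_range (p : ι) : castQ (v p) ∈ span ℚ (Set.range (castQ ∘ v)) :=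
    apply_mem_span_range (castQ ∘ v) p
  refine ⟨k, ?_⟩
  rw [castQ_sub]
  refine (mem_span_image_iff_apply_eq_zero hφ (sub_mem (mem_range k) ?_)).2 ?_
  · rw [castQ_sum]
    exact sum_mem fun i _ => mem_range i
  · rw [map_sub, hφsum, hk, sub_self]

end Hyperplane

section Update

variable {ι : Type*} [DecidableEq ι] {S : Set ι} {j : ι}

theorem eqOn_update_of_notMem {α : Type*} (f : ι → α) (x : α) (hj : j ∉ S) :
    Set.EqOn (Function.update f j x) f S :=
  fun _ hi => Function.update_of_ne (ne_of_mem_of_not_mem hi hj) x f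

theorem image_update_insert {α : Type*} (f : ι → α) (x : α) (hj : j ∉ S) :
    Function.update f j x '' insert j S = insert x (f '' S) := by
  rw [Set.image_insert_eq, Function.update_self, (eqOn_update_of_notMem f x hj).image_eq]

theorem linearIndepOn_update_insert_iff {K V : Type*} [Field K] [AddCommGroup V] [Module K V]
    {f : ι → V} {x : V} (hj : j ∉ S) :
    LinearIndepOn K (Function.update f j x) (insert j S) ↔
      LinearIndepOn K f S ∧ x ∉ span K (f '' S) := by
  have heq := eqOn_update_of_notMem f x hj
  rw [linearIndepOn_insert hj, linearIndepOn_congr heq, heq.image_eq, Function.update_self]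

theorem forall_mem_of_forall_update_sum_mem {R M : Type*} [Ring R] [AddCommGroup M] [Module R M]
    {f : ι → M} {τ : Finset ι} (hj : j ∈ τ) {p : Submodule R M}
    (hp : ∀ i, Function.update f j (∑ i ∈ τ, f i) i ∈ p) (i : ι) : f i ∈ p := by
  have mem_of_ne {k : ι} (hk : k ≠ j) : f k ∈ p := by simpa [hk] using hp k
  rcases eq_or_ne i j with rfl | hij
  · have hsum : ∑ k ∈ τ, f k ∈ p := by simpa using hp i
    rw [← Finset.add_sum_erase τ f hj] at hsum
    exact (add_mem_cancel_right (sum_mem fun k hk => mem_of_ne (Finset.ne_of_mem_erase hk))).1 hsum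
  · exact mem_of_ne hij

theorem IsPiNonsingular.isUnimodular_update_insert {n : ℕ} {v : ι → Fin n → ℤ}
    (hv : IsPiNonsingular v) (hj : j ∉ S) {q : Fin n → ℤ} {k : ι}
    (hS : LinearIndepOn ℚ (castQ ∘ v) S) (hq : castQ q ∉ span ℚ ((castQ ∘ v) '' S))
    (hk : castQ (v k - q) ∈ span ℚ ((castQ ∘ v) '' S)) :
    IsUnimodular (fun i : ↥(insert j S) => Function.update v j q i) := by
  rw [isUnimodular_subtype_iff, Function.comp_update, image_update_insert _ _ hj,
    image_update_insert _ _ hj]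
  refine ⟨(linearIndepOn_update_insert_iff hj).2 ⟨hS, hq⟩, fun z hz => ?_⟩
  have hkS : castQ (v k) ∉ span ℚ ((castQ ∘ v) '' S) := fun h => hq <| by
    simpa [castQ_sub] using sub_mem h hk
  have hkZ : v k - q ∈ span ℤ (v '' S) := hv.mem_span hS hk
  have hzQ : castQ z ∈ span ℚ ((castQ ∘ v) '' insert k S) := by
    rw [Set.image_insert_eq]
    obtain ⟨a, s, hs, hzs⟩ := mem_span_insert.1 hz
    refine mem_span_insert.2 ⟨a, s - a • castQ (v k - q), sub_mem hs (smul_mem _ _ hk), ?_⟩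
    rw [hzs, castQ_sub, Function.comp_apply]
    module
  have hzZ : z ∈ span ℤ (v '' insert k S) := hv.mem_span (hS.insert hkS) hzQ
  rw [Set.image_insert_eq] at hzZ
  obtain ⟨a, s, hs, rfl⟩ := mem_span_insert.1 hzZ
  refine mem_span_insert.2 ⟨a, s + a • (v k - q), add_mem hs (smul_mem _ _ hkZ), ?_⟩
  module

theorem stmt12_general {n : ℕ} {v : ι → Fin n → ℤ} (hv : IsPiNonsingular v) {τ : Finset ι}
    (hτ : ∀ r : ι →₀ ℚ, IsCircuitRelation (castQ ∘ v) r → IsCodefinite τ r) (hj : j ∈ τ) :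
    IsPiNonsingular (Function.update v j (∑ i ∈ τ, v i)) := by
  intro T hT
  by_cases hjT : j ∈ T
  · obtain ⟨B, -, hTB, hBspan, hB⟩ := exists_linearIndepOn_extension hT T.subset_univ
    obtain ⟨S, hjS, rfl⟩ : ∃ S, j ∉ S ∧ insert j S = B :=
      ⟨B \ {j}, by simp, Set.insert_sdiff_self_of_mem (hTB hjT)⟩
    rw [Function.comp_update] at hB hBspan
    rw [image_update_insert _ _ hjS, Set.image_univ, Set.range_subset_iff, castQ_sum] at hBspan
    obtain ⟨hS, hq⟩ := (linearIndepOn_update_insert_iff hjS).1 hB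
    have hspan := forall_mem_of_forall_update_sum_mem hj hBspan
    rw [← castQ_sum] at hspan
    obtain ⟨k, hk⟩ := hv.exists_sub_sum_mem_span hS hτ hq hspan
    exact (hv.isUnimodular_update_insert hjS hS hq hk).mono hTB
  · have heq := eqOn_update_of_notMem v (∑ i ∈ τ, v i) hjT
    rw [funext fun i : T => heq i.2]
    exact hv T (hT.congr heq.comp_left)

end Update

theorem stmt12 {n m : ℕ} (v : Fin m → Fin n → ℤ) (w : Fin m → ℤ)
    (hindep : LinearIndependent ℚ
      (fun i => ((castQ (v i), (w i : ℚ)) : (Fin n → ℚ) × ℚ)))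
    (hdep : ¬ LinearIndependent ℚ (fun i => castQ (v i)))
    (r : Fin m → ℚ) (hr : r ≠ 0) (hrel : ∑ i, r i • castQ (v i) = 0)
    -- `π`-nonsingularity: every `ℚ`-linearly independent subfamily is unimodular
    (hns : ∀ T : Set (Fin m), LinearIndependent ℚ (fun i : T => castQ (v i)) →
      IsUnimodular (fun i : T => v (i : Fin m)))
    (τ : Finset (Fin m))
    (hτindep : LinearIndependent ℚ (fun i : {i // i ∈ τ} => castQ (v i)))
    -- codefiniteness of `τ`
    (hcod : ¬ ((∃ i ∈ τ, 0 < r i) ∧ (∃ i ∈ τ, r i < 0)))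
    (q : Fin n → ℤ) (hq : q = ∑ i ∈ τ, v i)
    (j : Fin m) (hj : j ∈ τ) :
    ∀ T : Set (Fin m),
      LinearIndependent ℚ (fun i : T => castQ (Function.update v j q (i : Fin m))) →
      IsUnimodular (fun i : T => Function.update v j q (i : Fin m)) := by
  subst hq
  exact stmt12_general hns (fun _ hc => hc.isCodefinite hindep hr hrel hcod) hj
end
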